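/- Let F : ℝ² → ℝ² be a lift of a homeomorphism f of the two-torus homotopic to the identity, and let U ⊆ T² be open, bounded, connected and recurrent. If S ⊆ ℝ² is a line segment of positive length whose affine span contains no rational vectors and ρ_U(F) = S, then ρ(F) = S; moreover the sets φ_n(U) = {(F^n(z) − z)/n : z ∈ π⁻¹(U)} converge to S in Hausdorff distance as n → ∞. -/

import Mathlib

noncomputable section
open Filter Topology Metric Set MeasureTheory

/-- Euclidean space `ℝ^d`. -/
abbrev E (d : ℕ) := EuclideanSpace ℝ (Fin d)

/-- The integer lattice `ℤ^d` as an additive subgroup of `ℝ^d`. -/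
def ZLat (d : ℕ) : AddSubgroup (E d) where
  carrier := {z | ∀ i, ∃ m : ℤ, z i = (m : ℝ)}
  zero_mem' := fun i => ⟨0, by simp⟩
  add_mem' := by
    intro x y hx hy i
    obtain ⟨m, hm⟩ := hx i
    obtain ⟨n, hn⟩ := hy i
    exact ⟨m + n, by simp [PiLp.add_apply, hm, hn]⟩
  neg_mem' := by
    intro x hx i
    obtain ⟨m, hm⟩ := hx i
    exact ⟨-m, by simp [PiLp.neg_apply, hm]⟩

/-- The torus `T^d = ℝ^d / ℤ^d`. -/
abbrev T (d : ℕ) := E d ⧸ ZLat d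

/-- The canonical projection `π : ℝ^d → T^d`. -/
def tpi (d : ℕ) : E d → T d := QuotientAddGroup.mk

/-- The set of rotation vectors of orbit segments starting in `W ⊆ ℝ^d`:
`{ρ | ∃ nᵢ → ∞, zᵢ ∈ W, (F^{nᵢ}(zᵢ) - zᵢ)/nᵢ → ρ}`. -/
def rotRel {d : ℕ} (F : E d → E d) (W : Set (E d)) : Set (E d) :=
  {ρ | ∃ (n : ℕ → ℕ) (z : ℕ → E d),
    Tendsto n atTop atTop ∧ (∀ i, z i ∈ W) ∧
    Tendsto (fun i => (n i : ℝ)⁻¹ • (F^[n i] (z i) - z i)) atTop (𝓝 ρ)}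

/-- The Misiurewicz–Ziemian rotation set `ρ(F)` of a lift `F`. -/
def rotSet {d : ℕ} (F : E d → E d) : Set (E d) := rotRel F Set.univ

/-- The rotation subset `ρ_U(F)` for `U ⊆ T^d` (starting points in `π⁻¹(U)`). -/
def rotU {d : ℕ} (F : E d → E d) (U : Set (T d)) : Set (E d) :=
  rotRel F (tpi d ⁻¹' U)

/-- `F` is a lift of the torus homeomorphism `f` (which is then homotopic to the
identity, as expressed by commutation with the deck translations). -/
def IsLift {d : ℕ} (F : E d ≃ₜ E d) (f : T d ≃ₜ T d) : Prop :=
  (∀ z : E d, tpi d (F z) = f (tpi d z)) ∧ ∀ z : E d, ∀ m ∈ ZLat d, F (z + m) = F z + m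

/-- `U ⊆ T^d` is bounded: the connected components of `π⁻¹(U)` are bounded. -/
def BoundedSet {d : ℕ} (U : Set (T d)) : Prop :=
  ∀ z ∈ tpi d ⁻¹' U, Bornology.IsBounded (connectedComponentIn (tpi d ⁻¹' U) z)

/-- `U ⊆ T^d` is recurrent: `f^n(U) ∩ U ≠ ∅` for infinitely many `n ≥ 1`. -/
def Recurrent {d : ℕ} (f : T d ≃ₜ T d) (U : Set (T d)) : Prop :=
  {n : ℕ | 1 ≤ n ∧ ((⇑f)^[n] '' U ∩ U).Nonempty}.Infinite

/-- The Euclidean scalar product `⟨z, v⟩` in `ℝ²`. -/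
def sdot (v z : E 2) : ℝ := z 0 * v 0 + z 1 * v 1

/-- `⟨z, v^⊥⟩` where `v^⊥ = (-v₂, v₁)`. -/
def pdot (v z : E 2) : ℝ := z 1 * v 0 - z 0 * v 1

/-- The affine line `L_{λ,v} = λv + {v}^⊥ = {z | ⟨z,v⟩ = λ⟨v,v⟩}`. -/
def lineL (lam : ℝ) (v : E 2) : Set (E 2) := {z | sdot v z = lam * sdot v v}

/-- A vector of `ℝ²` is rational if both coordinates are rational. -/
def RatVec (z : E 2) : Prop := (∃ q : ℚ, z 0 = (q : ℝ)) ∧ ∃ q : ℚ, z 1 = (q : ℝ)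


lemma sin_ne_zero_diff (f : ℝ → ℝ) (hf : Continuous f) (h : ∀ x, Real.sin (f x) ≠ 0) (x y : ℝ) :
    f x - f y < Real.pi := by
  by_contra hcon
  push Not at hcon
  have hpi := Real.pi_pos
  set k : ℤ := ⌈f y / Real.pi⌉ with hk
  have h1 : f y ≤ k * Real.pi := by
    have := Int.le_ceil (f y / Real.pi)
    rwa [div_le_iff₀ hpi] at this
  have h2 : k * Real.pi ≤ f x := by
    have := (Int.ceil_lt_add_one (f y / Real.pi)).le
    have h3 : (k : ℝ) * Real.pi ≤ (f y / Real.pi + 1) * Real.pi :=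
      mul_le_mul_of_nonneg_right this hpi.le
    have h4 : (f y / Real.pi + 1) * Real.pi = f y + Real.pi := by field_simp
    linarith
  obtain ⟨t, ht⟩ := mem_range_of_exists_le_of_exists_ge hf ⟨y, h1⟩ ⟨x, h2⟩
  exact h t (by rw [ht]; exact Real.sin_int_mul_pi k)

lemma crossing (a1 a2 b1 b2 : ℝ → ℝ) (ha1 : Continuous a1) (ha2 : Continuous a2)
    (hb1 : Continuous b1) (hb2 : Continuous b2)
    (h1 : ∀ t, a1 0 < b1 t) (h2 : ∀ t, b1 t < a1 1)
    (h3 : ∀ s, b2 0 < a2 s) (h4 : ∀ s, a2 s < b2 1) :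
    ∃ s t, a1 s = b1 t ∧ a2 s = b2 t := by
  by_contra hcon
  push Not at hcon
  let d : ℝ × ℝ → ℂ := fun x => ((a1 x.1 - b1 x.2 : ℝ) : ℂ) + ((a2 x.1 - b2 x.2 : ℝ) : ℂ) * Complex.I
  have dre : ∀ x, (d x).re = a1 x.1 - b1 x.2 := by intro x; simp [d]
  have dim : ∀ x, (d x).im = a2 x.1 - b2 x.2 := by intro x; simp [d]
  have hd : Continuous d := by fun_prop
  have hd0 : ∀ x, d x ≠ 0 := by
    intro x hx
    have e1 := dre x
    have e2 := dim x
    rw [hx] at e1 e2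
    simp at e1 e2
    exact hcon x.1 x.2 (by linarith) (by linarith)
  have hz : ∃ e0 : ℂ, Complex.exp e0 = d (0, 0) := ⟨Complex.log (d (0,0)), Complex.exp_log (hd0 _)⟩
  obtain ⟨e0, he0⟩ := hz
  obtain ⟨L, hL, -⟩ := Complex.isCoveringMap_exp.existsUnique_continuousMap_lifts
    (⟨fun x => ⟨d x, hd0 x⟩, by fun_prop⟩ : C(ℝ × ℝ, {z : ℂ // z ≠ 0})) (0, 0) e0
    (by simp [Subtype.ext_iff, he0])
  have hLe : ∀ x, Complex.exp (L x) = d x := by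
    intro x
    have := congrFun hL.2 x
    simpa [Subtype.ext_iff] using this
  have hc : Continuous fun x => (L x).im := Complex.continuous_im.comp L.continuous
  set θ : ℝ × ℝ → ℝ := fun x => (L x).im with hθ
  have hcos : ∀ x, Real.exp (L x).re * Real.cos (θ x) = a1 x.1 - b1 x.2 := by
    intro x; rw [← dre, ← hLe, Complex.exp_re]
  have hsin : ∀ x, Real.exp (L x).re * Real.sin (θ x) = a2 x.1 - b2 x.2 := by
    intro x; rw [← dim, ← hLe, Complex.exp_im]
  have c0 : ∀ t, Real.cos (θ (0, t)) < 0 := by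
    intro t
    have := hcos (0, t)
    have h' := h1 t
    have := Real.exp_pos (L (0,t)).re
    by_contra hh; push Not at hh
    have := mul_nonneg this.le hh
    simp only at *; linarith
  have c1 : ∀ t, 0 < Real.cos (θ (1, t)) := by
    intro t
    have := hcos (1, t)
    have h' := h2 t
    have := Real.exp_pos (L (1,t)).re
    by_contra hh; push Not at hh
    have h5 := mul_nonpos_of_nonneg_of_nonpos (Real.exp_pos (L (1,t)).re).le hh
    simp only at *; linarith
  have s0 : ∀ s, 0 < Real.sin (θ (s, 0)) := by
    intro t
    have := hsin (t, 0)
    have h' := h3 t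
    by_contra hh; push Not at hh
    have h5 := mul_nonpos_of_nonneg_of_nonpos (Real.exp_pos (L (t,0)).re).le hh
    simp only at *; linarith
  have s1 : ∀ s, Real.sin (θ (s, 1)) < 0 := by
    intro t
    have := hsin (t, 1)
    have h' := h4 t
    by_contra hh; push Not at hh
    have h5 := mul_nonneg (Real.exp_pos (L (t,1)).re).le hh
    simp only at *; linarith
  have key : ∀ A B : ℝ, A - B < Real.pi → B - A < Real.pi → 
      0 < Real.sin A * Real.cos B - Real.cos A * Real.sin B → 0 < A - B := by
    intro A B h h' hs
    rw [← Real.sin_sub] at hs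
    by_contra hh
    push Not at hh
    have := Real.sin_nonpos_of_nonpos_of_neg_pi_le hh (by linarith)
    linarith
  have p0 := sin_ne_zero_diff (fun s => θ (s, 0)) (by fun_prop) (fun s => (s0 s).ne')
  have p1 := sin_ne_zero_diff (fun s => θ (s, 1)) (by fun_prop) (fun s => (s1 s).ne)
  have q0 := sin_ne_zero_diff (fun s => θ (0, s) + Real.pi / 2) (by fun_prop)
    (fun s => by simpa [Real.sin_add_pi_div_two] using (c0 s).ne)
  have q1 := sin_ne_zero_diff (fun s => θ (1, s) + Real.pi / 2) (by fun_prop)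
    (fun s => by simpa [Real.sin_add_pi_div_two] using (c1 s).ne')
  have k1 := key (θ (0,0)) (θ (1,0)) (p0 0 1) (p0 1 0)
    (by nlinarith [s0 0, s0 1, c0 0, c1 0, mul_pos (s0 0) (c1 0), mul_pos (s0 1) (neg_pos.2 (c0 0))])
  have k2 := key (θ (1,0)) (θ (1,1)) (by linarith [q1 0 1]) (by linarith [q1 1 0])
    (by nlinarith [mul_pos (s0 1) (c1 1), mul_pos (c1 0) (neg_pos.2 (s1 1))])
  have k3 := key (θ (1,1)) (θ (0,1)) (p1 1 0) (p1 0 1)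
    (by nlinarith [mul_pos (neg_pos.2 (s1 1)) (neg_pos.2 (c0 1)), mul_pos (c1 1) (neg_pos.2 (s1 0))])
  have k4 := key (θ (0,1)) (θ (0,0)) (by linarith [q0 1 0]) (by linarith [q0 0 1])
    (by nlinarith [mul_pos (neg_pos.2 (s1 0)) (neg_pos.2 (c0 0)), mul_pos (s0 0) (neg_pos.2 (c0 1))])
  linarith

lemma tpi_add_lat (z m : E 2) (hm : m ∈ ZLat 2) : tpi 2 (z + m) = tpi 2 z := by
  unfold tpi
  exact (QuotientAddGroup.mk_add_of_mem z hm)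

lemma tpi_sub_lat (z m : E 2) (hm : m ∈ ZLat 2) : tpi 2 (z - m) = tpi 2 z := by
  rw [sub_eq_add_neg]; exact tpi_add_lat z _ ((ZLat 2).neg_mem hm)

lemma tpi_eq (x y : E 2) (h : tpi 2 x = tpi 2 y) : x - y ∈ ZLat 2 := by
  unfold tpi at h
  have := QuotientAddGroup.eq.1 h
  have h2 := (ZLat 2).neg_mem this
  convert h2 using 1
  abel

lemma tpi_cont : Continuous (tpi 2) := continuous_quotient_mk'

lemma tpi_open : IsOpenMap (tpi 2) := QuotientAddGroup.isOpenMap_coe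

lemma exists_comp (U : Set (T 2)) (hUopen : IsOpen U) (hUbdd : BoundedSet U)
    (hUconn : IsConnected U) :
    ∃ C : Set (E 2), IsOpen C ∧ IsPathConnected C ∧ Bornology.IsBounded C ∧ C ⊆ tpi 2 ⁻¹' U ∧
      ∀ z, tpi 2 z ∈ U → ∃ m ∈ ZLat 2, z - m ∈ C := by
  set P := tpi 2 ⁻¹' U with hP
  have hPo : IsOpen P := hUopen.preimage tpi_cont
  obtain ⟨u, hu⟩ := hUconn.nonempty
  obtain ⟨z0, hz0⟩ : ∃ z0, tpi 2 z0 = u := QuotientAddGroup.mk_surjective u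
  have hz0P : z0 ∈ P := by rw [hP, mem_preimage, hz0]; exact hu
  set C := connectedComponentIn P z0 with hC
  have hCo : IsOpen C := hPo.connectedComponentIn
  have hCc : IsConnected C := isConnected_connectedComponentIn_iff.2 hz0P
  refine ⟨C, hCo, (hCo.isConnected_iff_isPathConnected).1 hCc, hUbdd z0 hz0P,
    connectedComponentIn_subset _ _, ?_⟩
  by_contra hcon
  push Not at hcon
  obtain ⟨z1, hz1U, hz1⟩ := hcon
  set Q : Set (E 2) := {z | z ∈ P ∧ ∀ m ∈ ZLat 2, z - m ∉ C} with hQ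
  have hQo : IsOpen Q := by
    rw [isOpen_iff_mem_nhds]
    intro z hz
    have ho : IsOpen (connectedComponentIn P z) := hPo.connectedComponentIn
    refine mem_of_superset (ho.mem_nhds (mem_connectedComponentIn hz.1)) ?_
    intro y hy
    refine ⟨connectedComponentIn_subset _ _ hy, ?_⟩
    intro m hm hym
    have hpre : IsPreconnected ((fun x => x - m) '' connectedComponentIn P z) :=
      isPreconnected_connectedComponentIn.image _ (by fun_prop)
    have hsub : (fun x => x - m) '' connectedComponentIn P z ⊆ P := by
      rintro _ ⟨x, hx, rfl⟩
      have := connectedComponentIn_subset _ _ hx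
      simp only [hP, mem_preimage] at this ⊢
      rwa [tpi_sub_lat _ _ hm]
    have h1 := hpre.subset_connectedComponentIn (mem_image_of_mem _ hy) hsub
    rw [← connectedComponentIn_eq hym] at h1
    exact hz.2 m hm (h1 (mem_image_of_mem _ (mem_connectedComponentIn hz.1)))
  have := hUconn.isPreconnected (tpi 2 '' C) (tpi 2 '' Q) (tpi_open _ hCo) (tpi_open _ hQo)
    (by
      intro x hx
      obtain ⟨z, rfl⟩ : ∃ z, tpi 2 z = x := QuotientAddGroup.mk_surjective x
      by_cases h : ∃ m ∈ ZLat 2, z - m ∈ C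
      · obtain ⟨m, hm, h⟩ := h
        exact Or.inl ⟨z - m, h, tpi_sub_lat _ _ hm⟩
      · push Not at h
        exact Or.inr ⟨z, ⟨hx, h⟩, rfl⟩)
    ⟨u, hu, z0, mem_connectedComponentIn hz0P, hz0⟩
    ⟨tpi 2 z1, hz1U, z1, ⟨hz1U, hz1⟩, rfl⟩
  obtain ⟨x, -, ⟨c, hc, rfl⟩, ⟨y, hy, hxy⟩⟩ := this
  refine hy.2 (y - c) (tpi_eq _ _ hxy) ?_
  simpa using hc

lemma iter_add (F : E 2 → E 2) (hF : ∀ z : E 2, ∀ m ∈ ZLat 2, F (z + m) = F z + m)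
    (n : ℕ) (z m : E 2) (hm : m ∈ ZLat 2) : F^[n] (z + m) = F^[n] z + m := by
  induction n generalizing z with
  | zero => rfl
  | succ n ih => rw [Function.iterate_succ_apply, hF z m hm, ih, Function.iterate_succ_apply]

lemma iter_sub (F : E 2 → E 2) (hF : ∀ z : E 2, ∀ m ∈ ZLat 2, F (z + m) = F z + m)
    (n : ℕ) (z m : E 2) (hm : m ∈ ZLat 2) : F^[n] (z - m) = F^[n] z - m := by
  rw [sub_eq_add_neg, iter_add F hF n z _ ((ZLat 2).neg_mem hm), sub_eq_add_neg]

lemma exists_fund (z : E 2) : ∃ m ∈ ZLat 2, ‖z - m‖ ≤ 2 := by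
  refine ⟨!₂[(⌊z 0⌋ : ℝ), (⌊z 1⌋ : ℝ)], ?_, ?_⟩
  · intro i
    fin_cases i
    · exact ⟨⌊z 0⌋, by simp⟩
    · exact ⟨⌊z 1⌋, by simp⟩
  · rw [EuclideanSpace.norm_eq, Real.sqrt_le_left (by norm_num)]
    simp only [Fin.sum_univ_two, PiLp.sub_apply, Real.norm_eq_abs, sq_abs]
    simp
    have h0 := Int.fract_nonneg (z 0)
    have h1 := Int.fract_nonneg (z 1)
    have h0' := Int.fract_lt_one (z 0)
    have h1' := Int.fract_lt_one (z 1)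
    simp only [Int.fract] at *
    nlinarith

lemma disp_bdd (F : E 2 → E 2) (hc : Continuous F)
    (hF : ∀ z : E 2, ∀ m ∈ ZLat 2, F (z + m) = F z + m) :
    ∃ M, 0 ≤ M ∧ ∀ n z, ‖F^[n] z - z‖ ≤ n * M := by
  have hcomp : IsCompact (closedBall (0 : E 2) 2) := isCompact_closedBall _ _
  obtain ⟨M, hM⟩ := hcomp.exists_bound_of_continuousOn (f := fun z => F z - z) (by fun_prop)
  have h1 : ∀ z, ‖F z - z‖ ≤ M := by
    intro z
    obtain ⟨m, hm, hz⟩ := exists_fund z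
    have := hM (z - m) (by simpa using hz)
    have h2 := iter_sub F hF 1 z m hm
    simp only [Function.iterate_one] at h2
    rw [h2] at this
    simpa using this
  refine ⟨M, (norm_nonneg _).trans (h1 0), ?_⟩
  intro n z
  induction n with
  | zero => simp
  | succ n ih =>
    rw [Function.iterate_succ_apply']
    have : F (F^[n] z) - z = (F (F^[n] z) - F^[n] z) + (F^[n] z - z) := by abel
    rw [this]
    refine (norm_add_le _ _).trans ?_
    push_cast
    linarith [h1 (F^[n] z)]

lemma joined_fun {S : Set (E 2)} {a b : E 2} (h : JoinedIn S a b) :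
    ∃ α : ℝ → E 2, Continuous α ∧ α 0 = a ∧ α 1 = b ∧ (∀ t, α t ∈ S) ∧ IsCompact (range α) := by
  obtain ⟨γ, hγ⟩ := h
  refine ⟨γ.extend, γ.continuous_extend, by simp, by simp, ?_, ?_⟩
  · intro t
    have : γ.extend t ∈ range γ.extend := mem_range_self t
    rw [Path.extend_range] at this
    obtain ⟨s, hs⟩ := this
    rw [← hs]; exact hγ s
  · rw [Path.extend_range]
    exact isCompact_range γ.continuous

lemma first_exit (β : ℝ → E 2) (hβ : Continuous β) (N : E 2 → ℝ) (hN : Continuous N)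
    (h0 : N (β 0) < 1) (h1 : 1 ≤ N (β 1)) :
    ∃ β' : ℝ → E 2, Continuous β' ∧ β' 0 = β 0 ∧ N (β' 1) = 1 ∧ (∀ t, N (β' t) ≤ 1) ∧
      ∀ t, ∃ s, β' t = β s := by
  have hNb : Continuous fun t => N (β t) := hN.comp hβ
  have hcl : IsCompact (Icc (0:ℝ) 1 ∩ {t | 1 ≤ N (β t)}) :=
    isCompact_Icc.inter_right (isClosed_le continuous_const hNb)
  obtain ⟨t0, ⟨⟨ht0, ht01⟩, ht0N⟩, hleast⟩ := hcl.exists_isLeast ⟨1, ⟨by norm_num, by norm_num⟩, h1⟩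
  have hlt : ∀ t, 0 ≤ t → t < t0 → N (β t) < 1 := by
    intro t h h'
    by_contra hh
    push Not at hh
    have := hleast ⟨⟨h, by linarith⟩, hh⟩
    linarith
  have heq : N (β t0) = 1 := by
    obtain ⟨t, ht, ht1⟩ := intermediate_value_Icc ht0 hNb.continuousOn ⟨h0.le, ht0N⟩
    have := hleast ⟨⟨ht.1, by linarith [ht.2]⟩, ht1.ge⟩
    have : t = t0 := le_antisymm ht.2 this
    rw [← this]; exact ht1
  refine ⟨fun s => β (t0 * max 0 (min s 1)), by fun_prop, by simp, by simpa using heq, ?_,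
    fun t => ⟨_, rfl⟩⟩
  intro s
  have a1 : 0 ≤ max 0 (min s 1) := le_max_left _ _
  have a2 : max 0 (min s 1) ≤ 1 := max_le (by norm_num) (min_le_right _ _)
  have a3 : t0 * max 0 (min s 1) ≤ t0 := mul_le_of_le_one_right ht0 a2
  rcases a3.lt_or_eq with h | h
  · exact (hlt _ (mul_nonneg ht0 a1) h).le
  · simp only [h]; exact heq.le

lemma cross2 (φ ψ : E 2 → ℝ) (hφ : Continuous φ) (hψ : Continuous ψ)
    (hinj : ∀ x y, φ x = φ y → ψ x = ψ y → x = y) (α β : ℝ → E 2)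
    (hα : Continuous α) (hβ : Continuous β)
    (h1 : ∀ t, φ (α 0) < φ (β t)) (h2 : ∀ t, φ (β t) < φ (α 1))
    (h3 : ∀ s, ψ (β 0) < ψ (α s)) (h4 : ∀ s, ψ (α s) < ψ (β 1)) : ∃ s t, α s = β t := by
  obtain ⟨s, t, e1, e2⟩ := crossing (fun s => φ (α s)) (fun s => ψ (α s)) (fun s => φ (β s))
    (fun s => ψ (β s)) (hφ.comp hα) (hψ.comp hα) (hφ.comp hβ) (hψ.comp hβ) h1 h2 h3 h4
  exact ⟨s, t, hinj _ _ e1 e2⟩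

lemma sdot_cont (l : E 2) : Continuous (sdot l) := by unfold sdot; fun_prop
lemma pdot_cont (l : E 2) : Continuous (pdot l) := by unfold pdot; fun_prop
lemma sdot_add (l x y : E 2) : sdot l (x + y) = sdot l x + sdot l y := by simp [sdot]; ring
lemma pdot_add (l x y : E 2) : pdot l (x + y) = pdot l x + pdot l y := by simp [pdot]; ring
lemma sdot_sub (l x y : E 2) : sdot l (x - y) = sdot l x - sdot l y := by simp [sdot]; ring
lemma pdot_sub (l x y : E 2) : pdot l (x - y) = pdot l x - pdot l y := by simp [pdot]; ring
lemma sdot_smul (l x : E 2) (c : ℝ) : sdot l (c • x) = c * sdot l x := by simp [sdot]; ring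
lemma pdot_smul (l x : E 2) (c : ℝ) : pdot l (c • x) = c * pdot l x := by simp [pdot]; ring

lemma abs_coord_le (z : E 2) (i : Fin 2) : |z i| ≤ ‖z‖ := by
  simpa using PiLp.norm_apply_le z i

lemma sdot_le (l z : E 2) : |sdot l z| ≤ (|l 0| + |l 1|) * ‖z‖ := by
  unfold sdot
  have h0 := abs_coord_le z 0
  have h1 := abs_coord_le z 1
  calc |z 0 * l 0 + z 1 * l 1| ≤ |z 0| * |l 0| + |z 1| * |l 1| := by
        rw [← abs_mul, ← abs_mul]; exact abs_add_le _ _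
    _ ≤ ‖z‖ * |l 0| + ‖z‖ * |l 1| := by gcongr
    _ = _ := by ring

lemma pdot_le (l z : E 2) : |pdot l z| ≤ (|l 0| + |l 1|) * ‖z‖ := by
  unfold pdot
  have h0 := abs_coord_le z 0
  have h1 := abs_coord_le z 1
  calc |z 1 * l 0 - z 0 * l 1| ≤ |z 1| * |l 0| + |z 0| * |l 1| := by
        rw [← abs_mul, ← abs_mul]; exact abs_sub _ _
    _ ≤ ‖z‖ * |l 0| + ‖z‖ * |l 1| := by gcongr
    _ = _ := by ring

lemma sdot_self_pos (l : E 2) (hl : l ≠ 0) : 0 < sdot l l := by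
  have : ¬ (l 0 = 0 ∧ l 1 = 0) := by
    rintro ⟨h0, h1⟩
    apply hl
    ext i
    fin_cases i
    · simpa using h0
    · simpa using h1
  unfold sdot
  by_contra hh
  push Not at hh
  apply this
  constructor <;> nlinarith [mul_self_nonneg (l 0), mul_self_nonneg (l 1)]

lemma norm_bound_dots (l z : E 2) (hl : l ≠ 0) (A B : ℝ) (hA : |sdot l z| ≤ A)
    (hB : |pdot l z| ≤ B) : ‖z‖ ≤ 2 * ((|l 0| + |l 1|) * (A + B) / sdot l l) := by
  have hq := sdot_self_pos l hl
  have e0 : z 0 * sdot l l = sdot l z * l 0 - pdot l z * l 1 := by unfold sdot pdot; ring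
  have e1 : z 1 * sdot l l = sdot l z * l 1 + pdot l z * l 0 := by unfold sdot pdot; ring
  have hA0 := (abs_nonneg _).trans hA
  have hB0 := (abs_nonneg _).trans hB
  have b0 : |z 0| ≤ (|l 0| + |l 1|) * (A + B) / sdot l l := by
    rw [le_div_iff₀ hq]
    calc |z 0| * sdot l l = |z 0 * sdot l l| := by rw [abs_mul, abs_of_pos hq]
      _ ≤ |sdot l z| * |l 0| + |pdot l z| * |l 1| := by
        rw [e0, ← abs_mul, ← abs_mul]; exact abs_sub _ _
      _ ≤ A * |l 0| + B * |l 1| := by gcongr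
      _ ≤ _ := by nlinarith [abs_nonneg (l 0), abs_nonneg (l 1),
                    mul_nonneg hA0 (abs_nonneg (l 1)), mul_nonneg hB0 (abs_nonneg (l 0))]
  have b1 : |z 1| ≤ (|l 0| + |l 1|) * (A + B) / sdot l l := by
    rw [le_div_iff₀ hq]
    calc |z 1| * sdot l l = |z 1 * sdot l l| := by rw [abs_mul, abs_of_pos hq]
      _ ≤ |sdot l z| * |l 1| + |pdot l z| * |l 0| := by
        rw [e1, ← abs_mul, ← abs_mul]; exact abs_add_le _ _
      _ ≤ A * |l 1| + B * |l 0| := by gcongr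
      _ ≤ _ := by nlinarith [abs_nonneg (l 0), abs_nonneg (l 1),
                    mul_nonneg hA0 (abs_nonneg (l 0)), mul_nonneg hB0 (abs_nonneg (l 1))]
  have : ‖z‖ ≤ |z 0| + |z 1| := by
    rw [EuclideanSpace.norm_eq, Real.sqrt_le_left (by positivity)]
    simp only [Fin.sum_univ_two, Real.norm_eq_abs]
    nlinarith [abs_nonneg (z 0), abs_nonneg (z 1), mul_nonneg (abs_nonneg (z 0)) (abs_nonneg (z 1))]
  linarith

lemma dots_inj (l : E 2) (hl : l ≠ 0) (x y : E 2) (h1 : sdot l x = sdot l y)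
    (h2 : pdot l x = pdot l y) : x = y := by
  have := norm_bound_dots l (x - y) hl 0 0 (by rw [sdot_sub, h1]; simp)
    (by rw [pdot_sub, h2]; simp)
  simp at this
  exact sub_eq_zero.1 this

lemma lat_smul (k : ℤ) (m : E 2) (hm : m ∈ ZLat 2) : (k : ℝ) • m ∈ ZLat 2 := by
  rw [Int.cast_smul_eq_zsmul]
  exact (ZLat 2).zsmul_mem hm k

lemma lat_smul_nat (k : ℕ) (m : E 2) (hm : m ∈ ZLat 2) : (k : ℝ) • m ∈ ZLat 2 := by
  exact_mod_cast lat_smul (k : ℤ) m hm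

lemma joined_translate {S : Set (E 2)} {a b : E 2} (h : JoinedIn S a b) (m : E 2)
    (S' : Set (E 2)) (hS : ∀ z ∈ S, z + m ∈ S') : JoinedIn S' (a + m) (b + m) := by
  have := h.map (f := fun z => z + m) (by fun_prop)
  refine this.mono ?_
  rintro _ ⟨z, hz, rfl⟩
  exact hS z hz

lemma enclosure (O : Set (E 2)) (hO : ∀ z ∈ O, ∀ m ∈ ZLat 2, z + m ∈ O) (u l : E 2)
    (hl : l ∈ ZLat 2) (hl0 : l ≠ 0) (hjoin : JoinedIn O u (u + l))
    (hV : ∀ M, ∃ y, JoinedIn O u y ∧ M < |pdot l y|) (r : ℝ) :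
    ∃ K, IsCompact K ∧ K ⊆ O ∧ ∃ R, ∀ x, ‖x‖ ≤ r → ∀ y, JoinedIn Kᶜ x y → ‖y‖ ≤ R := by
  have hq := sdot_self_pos l hl0
  set q := sdot l l with hqdef
  set l' : E 2 := !₂[-l 1, l 0] with hl'
  have hl'L : l' ∈ ZLat 2 := by
    intro i
    fin_cases i
    · obtain ⟨m, hm⟩ := hl 1
      exact ⟨-m, by simp [hl', hm]⟩
    · obtain ⟨m, hm⟩ := hl 0
      exact ⟨m, by simp [hl', hm]⟩
  have gl' : sdot l l' = 0 := by simp [sdot, hl']; ring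
  have hhl' : pdot l l' = q := by simp [pdot, hl', hqdef, sdot]
  have hhl : pdot l l = 0 := by simp [pdot]; ring
  have big : ∀ X : ℝ, ∃ k : ℤ, X < k * q := by
    intro X
    obtain ⟨k, hk⟩ := exists_int_gt (X / q)
    exact ⟨k, by rwa [div_lt_iff₀ hq] at hk⟩
  -- the radius
  obtain ⟨r0, hr0, hr⟩ : ∃ r0 > 0, ∀ x : E 2, ‖x‖ ≤ r → |sdot l x| ≤ r0 ∧ |pdot l x| ≤ r0 := by
    refine ⟨(|l 0| + |l 1|) * |r| + 1, by positivity, ?_⟩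
    intro x hx
    have : (|l 0| + |l 1|) * ‖x‖ ≤ (|l 0| + |l 1|) * |r| := by
      gcongr; exact hx.trans (le_abs_self r)
    exact ⟨by linarith [sdot_le l x], by linarith [pdot_le l x]⟩
  -- horizontal curve
  obtain ⟨γ, hγc, hγ0, hγ1, hγO, hγK⟩ := joined_fun hjoin
  obtain ⟨B0, hB0⟩ := hγK.exists_bound_of_continuousOn (f := pdot l) (pdot_cont l).continuousOn
  set Bd : Set (E 2) := O ∩ {z | |pdot l z| ≤ B0} with hBd
  have hBdl : ∀ z ∈ Bd, ∀ k : ℤ, z + (k : ℝ) • l ∈ Bd := by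
    intro z hz k
    refine ⟨hO _ hz.1 _ (lat_smul k l hl), ?_⟩
    have := hz.2
    simp only [mem_setOf_eq] at this ⊢
    rw [pdot_add, pdot_smul, hhl]; simpa using this
  have hj0 : JoinedIn Bd u (u + l) := by
    refine JoinedIn.ofLine (f := γ) hγc.continuousOn hγ0 hγ1 ?_
    rintro _ ⟨t, -, rfl⟩
    exact ⟨hγO t, by simpa using hB0 (γ t) (mem_range_self t)⟩
  have hj1 : ∀ k : ℕ, JoinedIn Bd u (u + (k : ℝ) • l) := by
    intro k
    induction k with
    | zero => simpa using JoinedIn.refl hj0.source_mem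
    | succ k ih =>
      refine ih.trans ?_
      have := joined_translate hj0 ((k : ℝ) • l) Bd (fun z hz => by exact_mod_cast hBdl z hz k)
      convert this using 1
      push_cast
      module
  have hB0' : 0 ≤ B0 := (abs_nonneg _).trans hj0.source_mem.2
  obtain ⟨c1, hc1⟩ := big (B0 + r0)
  set B := c1 * q + B0 + 1 with hB
  -- vertical curve
  obtain ⟨y, hjy, hy⟩ := hV (2 * B + 2 * q + |pdot l u|)
  obtain ⟨u', y', hjy', hy'⟩ : ∃ u' y', JoinedIn O u' y' ∧
      2 * B + 2 * q < pdot l y' - pdot l u' := by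
    rcases le_total 0 (pdot l y) with h | h
    · refine ⟨u, y, hjy, ?_⟩
      rw [abs_of_nonneg h] at hy
      linarith [le_abs_self (pdot l u)]
    · refine ⟨y, u, hjy.symm, ?_⟩
      rw [abs_of_nonpos h] at hy
      linarith [neg_abs_le (pdot l u)]
  obtain ⟨v, hvc, hv0, hv1, hvO, hvK⟩ := joined_fun hjy'
  obtain ⟨A0, hA0⟩ := hvK.exists_bound_of_continuousOn (f := sdot l) (sdot_cont l).continuousOn
  have hA0v : ∀ t, |sdot l (v t)| ≤ A0 := fun t => by simpa using hA0 (v t) (mem_range_self t)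
  have hA0' : 0 ≤ A0 := (abs_nonneg _).trans (hA0v 0)
  obtain ⟨e, he⟩ := big (A0 + r0)
  set A := e * q + A0 + 1 with hA
  obtain ⟨k, hk1, hk2⟩ : ∃ k : ℤ, pdot l u' + k * q < -B ∧ -B - 2 * q ≤ pdot l u' + k * q := by
    refine ⟨⌊(-B - pdot l u') / q⌋ - 1, ?_, ?_⟩
    · have := Int.floor_le ((-B - pdot l u') / q)
      rw [le_div_iff₀ hq] at this
      push_cast; linarith
    · have := (Int.lt_floor_add_one ((-B - pdot l u') / q)).le
      rw [div_le_iff₀ hq] at this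
      push_cast; linarith
  obtain ⟨J, hJ⟩ : ∃ J : ℕ, A + |sdot l u| < J * q := by
    obtain ⟨J, hJ⟩ := exists_nat_gt ((A + |sdot l u|) / q)
    exact ⟨J, by rwa [div_lt_iff₀ hq] at hJ⟩
  have hj2 : JoinedIn Bd (u + (-(J:ℤ) : ℤ) • l) (u + (J : ℝ) • l) := by
    have := joined_translate (hj1 (2 * J)) ((-(J:ℤ) : ℤ) • l) Bd
      (fun z hz => by
        have := hBdl z hz (-(J:ℤ))
        rwa [Int.cast_smul_eq_zsmul] at this)
    convert this using 1
    rw [← Int.cast_smul_eq_zsmul ℝ]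
    push_cast
    module
  obtain ⟨Γ, hΓc, hΓ0, hΓ1, hΓB, hΓK⟩ := joined_fun hj2
  have hΓh : ∀ t, |pdot l (Γ t)| ≤ B0 := fun t => (hΓB t).2
  have gΓ0 : sdot l (Γ 0) < -A := by
    rw [hΓ0, ← Int.cast_smul_eq_zsmul ℝ, sdot_add, sdot_smul]
    push_cast
    linarith [le_abs_self (sdot l u)]
  have gΓ1 : A < sdot l (Γ 1) := by
    rw [hΓ1, sdot_add, sdot_smul]
    linarith [neg_abs_le (sdot l u)]
  have hApos : 0 < A := by linarith
  have hBpos : 0 < B := by linarith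
  let m1 : E 2 := (c1 : ℝ) • l'
  let m2 : E 2 := (e : ℝ) • l
  let m3 : E 2 := (k : ℝ) • l'
  have hm1 : m1 ∈ ZLat 2 := lat_smul _ _ hl'L
  have hm2 : m2 ∈ ZLat 2 := lat_smul _ _ hl
  have hm3 : m3 ∈ ZLat 2 := lat_smul _ _ hl'L
  have dm1 : sdot l m1 = 0 ∧ pdot l m1 = c1 * q := by
    simp only [m1]; rw [sdot_smul, pdot_smul, gl', hhl']; simp
  have dm2 : sdot l m2 = e * q ∧ pdot l m2 = 0 := by
    simp only [m2]; rw [sdot_smul, pdot_smul, hhl]; simp [hqdef]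
  have dm3 : sdot l m3 = 0 ∧ pdot l m3 = k * q := by
    simp only [m3]; rw [sdot_smul, pdot_smul, gl', hhl']; simp
  let α1 : ℝ → E 2 := fun t => Γ t + m1
  let α2 : ℝ → E 2 := fun t => Γ t + -m1
  let α3 : ℝ → E 2 := fun t => v t + (m2 + m3)
  let α4 : ℝ → E 2 := fun t => v t + (-m2 + m3)
  have tr : ∀ (α : ℝ → E 2) (m : E 2), IsCompact (range α) → IsCompact (range fun t => α t + m) := by
    intro α m h
    have := h.image (f := fun z => z + m) (by fun_prop)
    rwa [← range_comp] at this
  refine ⟨range α1 ∪ range α2 ∪ range α3 ∪ range α4,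
    (((tr _ _ hΓK).union (tr _ _ hΓK)).union (tr _ _ hvK)).union (tr _ _ hvK), ?_,
    2 * ((|l 0| + |l 1|) * (A + B) / sdot l l), ?_⟩
  · rintro z (((⟨t, rfl⟩ | ⟨t, rfl⟩) | ⟨t, rfl⟩) | ⟨t, rfl⟩)
    · exact hO _ (hΓB t).1 _ hm1
    · exact hO _ (hΓB t).1 _ ((ZLat 2).neg_mem hm1)
    · exact hO _ (hvO t) _ ((ZLat 2).add_mem hm2 hm3)
    · exact hO _ (hvO t) _ ((ZLat 2).add_mem ((ZLat 2).neg_mem hm2) hm3)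
  intro x hx z hxz
  by_contra hz
  obtain ⟨β0, hβ0c, hβ00, hβ01, hβ0K, -⟩ := joined_fun hxz
  have hgc := sdot_cont l
  have hhc := pdot_cont l
  obtain ⟨β, hβc, hβ0, hβ1, hβN, hβr⟩ := first_exit β0 hβ0c
    (fun z => max (|sdot l z| / A) (|pdot l z| / B)) (by fun_prop)
    (by
      rw [hβ00]
      refine max_lt ?_ ?_
      · rw [div_lt_one hApos]; linarith [(hr x hx).1]
      · rw [div_lt_one hBpos]; linarith [(hr x hx).2])
    (by
      rw [hβ01]
      by_contra hh
      push Not at hh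
      rw [max_lt_iff, div_lt_one hApos, div_lt_one hBpos] at hh
      exact hz (norm_bound_dots l z hl0 A B hh.1.le hh.2.le))
  have hβA : ∀ t, |sdot l (β t)| ≤ A := fun t => by
    have := (le_max_left _ _).trans (hβN t)
    rwa [div_le_one hApos] at this
  have hβB : ∀ t, |pdot l (β t)| ≤ B := fun t => by
    have := (le_max_right _ _).trans (hβN t)
    rwa [div_le_one hBpos] at this
  have hβK : ∀ t, β t ∉ range α1 ∪ range α2 ∪ range α3 ∪ range α4 := by
    intro t
    obtain ⟨s, hs⟩ := hβr t
    rw [hs]; exact hβ0K s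
  have hb0 := hr x hx
  rw [← hβ00, ← hβ0] at hb0
  have hb0g := abs_le.1 hb0.1
  have hb0h := abs_le.1 hb0.2
  have inj1 := dots_inj l hl0
  have vh0 : pdot l (v 0) + k * q < -B := by rw [hv0]; exact hk1
  have vh1 : B < pdot l (v 1) + k * q := by rw [hv1]; linarith
  rcases max_choice (|sdot l (β 1)| / A) (|pdot l (β 1)| / B) with hm | hm
  · rw [hm, div_eq_one_iff_eq hApos.ne'] at hβ1
    rcases abs_choice (sdot l (β 1)) with hs | hs <;> rw [hs] at hβ1
    · obtain ⟨s, t, hst⟩ := cross2 (pdot l) (sdot l) hhc hgc (fun x y h h' => inj1 x y h' h) α3 β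
        (by fun_prop) hβc
        (fun t => by
          simp only [α3]; rw [pdot_add, pdot_add, dm2.2, dm3.2]
          linarith [(abs_le.1 (hβB t)).1])
        (fun t => by
          simp only [α3]; rw [pdot_add, pdot_add, dm2.2, dm3.2]
          linarith [(abs_le.1 (hβB t)).2])
        (fun s => by
          simp only [α3]; rw [sdot_add, sdot_add, dm2.1, dm3.1]
          linarith [(abs_le.1 (hA0v s)).1])
        (fun s => by
          simp only [α3]; rw [sdot_add, sdot_add, dm2.1, dm3.1]
          linarith [(abs_le.1 (hA0v s)).2])
      exact hβK t (Or.inl (Or.inr ⟨s, hst⟩))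
    · obtain ⟨s, t, hst⟩ := cross2 (pdot l) (fun z => - sdot l z) hhc hgc.neg
        (fun x y h h' => inj1 x y (neg_injective h') h) α4 β
        (by fun_prop) hβc
        (fun t => by
          simp only [α4, neg_add_eq_sub]; rw [pdot_add, pdot_sub, dm2.2, dm3.2]
          linarith [(abs_le.1 (hβB t)).1])
        (fun t => by
          simp only [α4, neg_add_eq_sub]; rw [pdot_add, pdot_sub, dm2.2, dm3.2]
          linarith [(abs_le.1 (hβB t)).2])
        (fun s => by
          simp only [α4, neg_add_eq_sub]; rw [sdot_add, sdot_sub, dm2.1, dm3.1]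
          linarith [(abs_le.1 (hA0v s)).2])
        (fun s => by
          simp only [α4, neg_add_eq_sub]; rw [sdot_add, sdot_sub, dm2.1, dm3.1]
          linarith [(abs_le.1 (hA0v s)).1])
      exact hβK t (Or.inr ⟨s, hst⟩)
  · rw [hm, div_eq_one_iff_eq hBpos.ne'] at hβ1
    rcases abs_choice (pdot l (β 1)) with hs | hs <;> rw [hs] at hβ1
    · obtain ⟨s, t, hst⟩ := cross2 (sdot l) (pdot l) hgc hhc inj1 α1 β
        (by fun_prop) hβc
        (fun t => by
          simp only [α1]; rw [sdot_add, dm1.1]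
          linarith [(abs_le.1 (hβA t)).1])
        (fun t => by
          simp only [α1]; rw [sdot_add, dm1.1]
          linarith [(abs_le.1 (hβA t)).2])
        (fun s => by
          simp only [α1]; rw [pdot_add, dm1.2]
          linarith [(abs_le.1 (hΓh s)).1])
        (fun s => by
          simp only [α1]; rw [pdot_add, dm1.2]
          linarith [(abs_le.1 (hΓh s)).2])
      exact hβK t (Or.inl (Or.inl (Or.inl ⟨s, hst⟩)))
    · obtain ⟨s, t, hst⟩ := cross2 (sdot l) (fun z => - pdot l z) hgc hhc.neg
        (fun x y h h' => inj1 x y h (neg_injective h')) α2 β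
        (by fun_prop) hβc
        (fun t => by
          simp only [α2, ← sub_eq_add_neg]; rw [sdot_sub, dm1.1]
          linarith [(abs_le.1 (hβA t)).1])
        (fun t => by
          simp only [α2, ← sub_eq_add_neg]; rw [sdot_sub, dm1.1]
          linarith [(abs_le.1 (hβA t)).2])
        (fun s => by
          simp only [α2, ← sub_eq_add_neg]; rw [pdot_sub, dm1.2]
          linarith [(abs_le.1 (hΓh s)).2])
        (fun s => by
          simp only [α2, ← sub_eq_add_neg]; rw [pdot_sub, dm1.2]
          linarith [(abs_le.1 (hΓh s)).1])
      exact hβK t (Or.inl (Or.inl (Or.inr ⟨s, hst⟩)))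

lemma lim_bdd {V : Type*} [NormedAddCommGroup V] [NormedSpace ℝ V] (n : ℕ → ℕ)
    (hn : Tendsto n atTop atTop) (a : ℕ → V) (c : V) (M : ℝ)
    (h : ∀ i, ‖a i - (n i : ℝ) • c‖ ≤ M) :
    Tendsto (fun i => (n i : ℝ)⁻¹ • a i) atTop (𝓝 c) := by
  have hnr : Tendsto (fun i => (n i : ℝ)) atTop atTop := tendsto_natCast_atTop_atTop.comp hn
  have h1 : Tendsto (fun i => (n i : ℝ)⁻¹ * M) atTop (𝓝 0) := by
    simpa using hnr.inv_tendsto_atTop.mul_const M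
  rw [tendsto_iff_norm_sub_tendsto_zero]
  refine squeeze_zero' (Eventually.of_forall fun i => norm_nonneg _) ?_ h1
  filter_upwards [hn.eventually_ge_atTop 1] with i hi
  have hpos : (0 : ℝ) < n i := by exact_mod_cast hi
  have : (n i : ℝ)⁻¹ • a i - c = (n i : ℝ)⁻¹ • (a i - (n i : ℝ) • c) := by
    rw [smul_sub, smul_smul, inv_mul_cancel₀ hpos.ne', one_smul]
  rw [this, norm_smul, norm_inv, Real.norm_of_nonneg hpos.le]
  gcongr
  exact h i

lemma hull_lemma (F : E 2 ≃ₜ E 2) (K : Set (E 2)) (R : ℝ) (x : E 2)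
    (hR : ∀ y, JoinedIn Kᶜ x y → ‖y‖ ≤ R) (n : ℕ)
    (A : Set (E 2)) (hAc : IsClosed A) (hAv : Convex ℝ A) (hKA : ∀ w ∈ K, (⇑F)^[n] w ∈ A) :
    (⇑F)^[n] x ∈ A := by
  by_contra hx
  have hFc : Continuous (⇑F)^[n] := F.continuous.iterate n
  have hGc : Continuous (⇑F.symm)^[n] := F.symm.continuous.iterate n
  have hGF : ∀ z, (⇑F.symm)^[n] ((⇑F)^[n] z) = z :=
    Function.LeftInverse.iterate (fun z => F.symm_apply_apply z) n
  have hFG : ∀ z, (⇑F)^[n] ((⇑F.symm)^[n] z) = z :=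
    Function.LeftInverse.iterate (fun z => F.apply_symm_apply z) n
  obtain ⟨φ, s, hφ1, hφ2⟩ := geometric_hahn_banach_closed_point hAv hAc hx
  obtain ⟨w, hw0, hw⟩ : ∃ w : E 2, w ≠ 0 ∧ 0 ≤ φ w := by
    have h1 : (EuclideanSpace.single 0 1 : E 2) ≠ 0 := by
      intro h
      have := congrArg (fun z : E 2 => z 0) h
      simp at this
    rcases le_total 0 (φ (EuclideanSpace.single 0 1)) with h | h
    · exact ⟨_, h1, h⟩
    · exact ⟨-EuclideanSpace.single 0 1, neg_ne_zero.2 h1, by rw [map_neg]; linarith⟩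
  have hray : ∀ t : ℝ, 0 ≤ t → ‖(⇑F.symm)^[n] ((⇑F)^[n] x + t • w)‖ ≤ R := by
    intro t ht
    apply hR
    refine JoinedIn.ofLine (f := fun τ : ℝ => (⇑F.symm)^[n] ((⇑F)^[n] x + (τ * t) • w))
      (by fun_prop) (by simp [hGF]) (by simp) ?_
    rintro _ ⟨τ, hτ, rfl⟩ hmem
    have := hφ1 _ (hKA _ hmem)
    rw [hFG, map_add, map_smul] at this
    have h2 : 0 ≤ (τ * t) • φ w := smul_nonneg (mul_nonneg hτ.1 ht) hw
    linarith
  have hb : IsCompact ((⇑F)^[n] '' closedBall (0 : E 2) R) := (isCompact_closedBall _ _).image hFc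
  obtain ⟨B, hB⟩ := hb.isBounded.exists_norm_le
  have hB' : ∀ t : ℝ, 0 ≤ t → ‖(⇑F)^[n] x + t • w‖ ≤ B := by
    intro t ht
    apply hB
    exact ⟨_, by simpa using hray t ht, hFG _⟩
  have hwpos : 0 < ‖w‖ := norm_pos_iff.2 hw0
  have h0 := hB' 0 le_rfl
  have hBn : 0 ≤ B := (norm_nonneg _).trans h0
  have h1 := hB' ((2 * B + 1) / ‖w‖) (by positivity)
  have h2 : ‖((2 * B + 1) / ‖w‖) • w‖ = 2 * B + 1 := by
    rw [norm_smul, Real.norm_of_nonneg (by positivity)]; field_simp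
  have h3 : ‖((2 * B + 1) / ‖w‖) • w‖ ≤
      ‖(⇑F)^[n] x + ((2 * B + 1) / ‖w‖) • w‖ + ‖(⇑F)^[n] x + (0:ℝ) • w‖ := by
    have : ((2 * B + 1) / ‖w‖) • w =
      ((⇑F)^[n] x + ((2 * B + 1) / ‖w‖) • w) - ((⇑F)^[n] x + (0:ℝ) • w) := by module
    have e := norm_sub_le ((⇑F)^[n] x + ((2 * B + 1) / ‖w‖) • w) ((⇑F)^[n] x + (0:ℝ) • w)
    exact (congrArg norm this).le.trans e
  linarith

lemma shadow (F : E 2 ≃ₜ E 2) (hF : ∀ z : E 2, ∀ m ∈ ZLat 2, F (z + m) = F z + m)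
    (C : Set (E 2)) (hCo : IsOpen C) (hCb : Bornology.IsBounded C) (K : Set (E 2))
    (hK : IsCompact K)
    (hKO : ∀ w ∈ K, ∃ (i : ℕ) (m : E 2), m ∈ ZLat 2 ∧ ∃ z ∈ C, w = (⇑F)^[i] (z + m)) :
    ∃ c : ℝ, ∀ w ∈ K, ∀ n : ℕ, ∃ z ∈ C, ‖(⇑F)^[n] w - ((⇑F)^[n] z - z)‖ ≤ c := by
  obtain ⟨M, hM0, hM⟩ := disp_bdd F F.continuous hF
  obtain ⟨D, hD⟩ := hCb.exists_norm_le
  refine hK.induction_on (p := fun s => ∃ c : ℝ, ∀ w ∈ s, ∀ n : ℕ, ∃ z ∈ C,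
    ‖(⇑F)^[n] w - ((⇑F)^[n] z - z)‖ ≤ c) ⟨0, by simp⟩ ?_ ?_ ?_
  · rintro s t hst ⟨c, hc⟩
    exact ⟨c, fun w hw => hc w (hst hw)⟩
  · rintro s t ⟨c, hc⟩ ⟨c', hc'⟩
    refine ⟨max c c', ?_⟩
    rintro w (hw | hw) n
    · obtain ⟨z, hz, h⟩ := hc w hw n
      exact ⟨z, hz, h.trans (le_max_left _ _)⟩
    · obtain ⟨z, hz, h⟩ := hc' w hw n
      exact ⟨z, hz, h.trans (le_max_right _ _)⟩
  · intro w hw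
    obtain ⟨i, m, hm, z, hz, rfl⟩ := hKO w hw
    have hGc : Continuous (⇑F.symm)^[i] := F.symm.continuous.iterate i
    have hGF : ∀ z, (⇑F.symm)^[i] ((⇑F)^[i] z) = z :=
      Function.LeftInverse.iterate (fun z => F.symm_apply_apply z) i
    have hFG : ∀ z, (⇑F)^[i] ((⇑F.symm)^[i] z) = z :=
      Function.LeftInverse.iterate (fun z => F.apply_symm_apply z) i
    have ho : IsOpen ((fun y => (⇑F.symm)^[i] y - m) ⁻¹' C) := hCo.preimage (by fun_prop)
    refine ⟨_, mem_nhdsWithin_of_mem_nhds (ho.mem_nhds ?_), i * M + ‖m‖ + D, ?_⟩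
    · simp only [mem_preimage]
      rw [hGF]; simpa using hz
    · intro y hy n
      refine ⟨_, hy, ?_⟩
      have hz' : (⇑F.symm)^[i] y - m ∈ C := hy
      set z' := (⇑F.symm)^[i] y - m with hz'd
      have hy' : y = (⇑F)^[i] (z' + m) := by rw [hz'd, sub_add_cancel, hFG]
      have e1 : (⇑F)^[n] y = (⇑F)^[i] ((⇑F)^[n] z') + m := by
        rw [hy', iter_add F hF i z' m hm, iter_add F hF n _ m hm, ← Function.iterate_add_apply,
          ← Function.iterate_add_apply, Nat.add_comm n i]
      have e2 : (⇑F)^[n] y - ((⇑F)^[n] z' - z') =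
        ((⇑F)^[i] ((⇑F)^[n] z') - (⇑F)^[n] z') + m + z' := by rw [e1]; abel
      rw [e2]
      refine (norm_add_le _ _).trans (add_le_add ((norm_add_le _ _).trans ?_) (hD _ hz'))
      have := hM i ((⇑F)^[n] z')
      linarith

lemma rat_of_lat (m : E 2) (hm : m ∈ ZLat 2) (n : ℕ) : RatVec ((n : ℝ)⁻¹ • m) := by
  constructor
  · obtain ⟨k, hk⟩ := hm 0
    exact ⟨(n : ℚ)⁻¹ * k, by simp [hk]⟩
  · obtain ⟨k, hk⟩ := hm 1
    exact ⟨(n : ℚ)⁻¹ * k, by simp [hk]⟩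

lemma get_enclosure (F : E 2 ≃ₜ E 2) (f : T 2 ≃ₜ T 2) (hlift : IsLift F f)
    (U : Set (T 2)) (hUrec : Recurrent f U)
    (S : Set (E 2)) (p q : E 2) (hpq : p ≠ q) (hSseg : S = segment ℝ p q)
    (hnorat : ∀ z ∈ (affineSpan ℝ S : Set (E 2)), ¬ RatVec z)
    (hrot : rotU (⇑F) U = S)
    (C : Set (E 2)) (hCpc : IsPathConnected C) (hCb : Bornology.IsBounded C)
    (hCU : C ⊆ tpi 2 ⁻¹' U) (hCcov : ∀ z, tpi 2 z ∈ U → ∃ m ∈ ZLat 2, z - m ∈ C) :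
    ∃ K, IsCompact K ∧
      (∀ w ∈ K, ∃ (i : ℕ) (m : E 2), m ∈ ZLat 2 ∧ ∃ z ∈ C, w = (⇑F)^[i] (z + m)) ∧
      ∃ R, ∀ x, ‖x‖ ≤ 2 → ∀ y, JoinedIn Kᶜ x y → ‖y‖ ≤ R := by
  have hF := hlift.2
  set O : Set (E 2) := {w | ∃ (i : ℕ) (m : E 2), m ∈ ZLat 2 ∧ ∃ z ∈ C, w = (⇑F)^[i] (z + m)} with hOdef
  obtain ⟨M, hM0, hM⟩ := disp_bdd F F.continuous hF
  obtain ⟨D, hD⟩ := hCb.exists_norm_le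
  obtain ⟨u, huC⟩ := hCpc.nonempty
  have hD0 : 0 ≤ D := (norm_nonneg _).trans (hD u huC)
  have hO : ∀ z ∈ O, ∀ m ∈ ZLat 2, z + m ∈ O := by
    rintro _ ⟨i, m', hm', z, hz, rfl⟩ m hm
    exact ⟨i, m' + m, (ZLat 2).add_mem hm' hm, z, hz, by
      rw [← add_assoc, iter_add F hF i (z + m') m hm]⟩
  have htr : ∀ a b m, m ∈ ZLat 2 → JoinedIn O a b → JoinedIn O (a + m) (b + m) :=
    fun a b m hm h => joined_translate h m O (fun z hz => hO z hz m hm)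
  have hJF : ∀ i a b, JoinedIn O a b → JoinedIn O ((⇑F)^[i] a) ((⇑F)^[i] b) := by
    intro i a b h
    refine (h.map (F.continuous.iterate i)).mono ?_
    rintro _ ⟨_, ⟨j, m, hm, z, hz, rfl⟩, rfl⟩
    exact ⟨i + j, m, hm, z, hz, by rw [Function.iterate_add_apply]⟩
  have hJC : ∀ a ∈ C, ∀ b ∈ C, JoinedIn O a b := by
    intro a ha b hb
    refine (hCpc.joinedIn a ha b hb).mono ?_
    intro z hz
    exact ⟨0, 0, (ZLat 2).zero_mem, z, hz, by simp⟩
  have hsemi : ∀ n z, tpi 2 ((⇑F)^[n] z) = (⇑f)^[n] (tpi 2 z) := by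
    intro n
    induction n with
    | zero => intro z; rfl
    | succ n ih => intro z; rw [Function.iterate_succ_apply, ih, hlift.1, Function.iterate_succ_apply]
  set Rec : Set ℕ := {n : ℕ | 1 ≤ n ∧ ((⇑f)^[n] '' U ∩ U).Nonempty} with hRec
  have hrec : ∀ n ∈ Rec, ∃ m ∈ ZLat 2, ∃ x ∈ C, (⇑F)^[n] x - m ∈ C := by
    rintro n ⟨hn, _, ⟨a, haU, rfl⟩, haU'⟩
    obtain ⟨z, rfl⟩ : ∃ z, tpi 2 z = a := QuotientAddGroup.mk_surjective a
    obtain ⟨m0, hm0, hx⟩ := hCcov z haU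
    have : tpi 2 ((⇑F)^[n] (z - m0)) ∈ U := by
      rw [hsemi, tpi_sub_lat _ _ hm0]; exact haU'
    obtain ⟨m, hm, h⟩ := hCcov _ this
    exact ⟨m, hm, z - m0, hx, h⟩
  have hj1 : ∀ n m, m ∈ ZLat 2 → (∃ x ∈ C, (⇑F)^[n] x - m ∈ C) →
      JoinedIn O ((⇑F)^[n] u) (u + m) := by
    rintro n m hm ⟨x, hx, hxm⟩
    have h1 := hJF n u x (hJC u huC x hx)
    have h2 := htr _ _ m hm (hJC _ hxm u huC)
    rw [sub_add_cancel] at h2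
    exact h1.trans h2
  have hj2 : ∀ n m, m ∈ ZLat 2 → (∃ x ∈ C, (⇑F)^[n] x - m ∈ C) → ∀ k : ℕ,
      JoinedIn O ((⇑F)^[n * k] u) (u + (k : ℝ) • m) := by
    intro n m hm hx k
    induction k with
    | zero => simpa using hJC u huC u huC
    | succ k ih =>
      have h1 := hJF n _ _ ih
      rw [← Function.iterate_add_apply, iter_add F hF n _ _ (lat_smul_nat k m hm)] at h1
      have h2 := htr _ _ _ (lat_smul_nat k m hm) (hj1 n m hm hx)
      have h3 := h1.trans h2
      convert h3 using 1
      · congr 2; ring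
      · push_cast; module
  -- first recurrence
  obtain ⟨n1, hn1⟩ := hUrec.nonempty
  have hn1' : 1 ≤ n1 := hn1.1
  have hn1pos : (0 : ℝ) < n1 := by exact_mod_cast hn1'
  obtain ⟨m1, hm1, hx1⟩ := hrec n1 hn1
  have hsub : S ⊆ affineSpan ℝ S := subset_affineSpan ℝ S
  obtain ⟨n2, m2, hm2, hx2, hne⟩ : ∃ (n2 : ℕ) (m2 : E 2), m2 ∈ ZLat 2 ∧
      (∃ x ∈ C, (⇑F)^[n2] x - m2 ∈ C) ∧ (n1 : ℝ) • m2 - (n2 : ℝ) • m1 ≠ 0 := by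
    by_contra hcon
    push Not at hcon
    have hinf : ∀ i : ℕ, ∃ n ∈ Rec, i < n := fun i => hUrec.exists_gt i
    choose N hNR hNi using hinf
    have hx : ∀ i, ∃ m ∈ ZLat 2, ∃ x ∈ C, (⇑F)^[N i] x - m ∈ C := fun i => hrec _ (hNR i)
    choose m hm x hxC hxm using hx
    have hmem : (n1 : ℝ)⁻¹ • m1 ∈ rotU (⇑F) U := by
      have hNt : Tendsto N atTop atTop := tendsto_atTop_mono (fun i => (hNi i).le) tendsto_id
      refine ⟨N, x, hNt, fun i => hCU (hxC i), ?_⟩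
      refine lim_bdd N hNt _ _ (D + D) ?_
      intro i
      have h1 := hcon (N i) (m i) (hm i) ⟨x i, hxC i, hxm i⟩
      have h2 : (N i : ℝ) • (n1 : ℝ)⁻¹ • m1 = m i := by
        rw [smul_comm, ← sub_eq_zero.1 h1, smul_smul, inv_mul_cancel₀ hn1pos.ne', one_smul]
      rw [h2]
      have h3 : (⇑F)^[N i] (x i) - x i - m i = ((⇑F)^[N i] (x i) - m i) - x i := by abel
      rw [h3]
      exact (norm_sub_le _ _).trans (add_le_add (hD _ (hxm i)) (hD _ (hxC i)))
    rw [hrot] at hmem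
    exact hnorat _ (hsub hmem) (rat_of_lat m1 hm1 n1)
  set l := (n1 : ℝ) • m2 - (n2 : ℝ) • m1 with hl
  have hlL : l ∈ ZLat 2 := (ZLat 2).sub_mem (lat_smul_nat _ _ hm2) (lat_smul_nat _ _ hm1)
  have hjl : JoinedIn O u (u + l) := by
    have h1 := hj2 n1 m1 hm1 hx1 n2
    have h2 := hj2 n2 m2 hm2 hx2 n1
    rw [mul_comm] at h2
    have h3 := htr _ _ (-((n2 : ℝ) • m1)) ((ZLat 2).neg_mem (lat_smul_nat _ _ hm1)) (h1.symm.trans h2)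
    convert h3 using 1
    · module
    · rw [hl]; module
  have hjk : ∀ k : ℕ, ∀ z ∈ C, JoinedIn O u ((⇑F)^[n1 * k] z - (k : ℝ) • m1) := by
    intro k z hz
    have h1 := (hj2 n1 m1 hm1 hx1 k).symm.trans (hJF (n1 * k) _ _ (hJC u huC z hz))
    have h3 := htr _ _ (-((k : ℝ) • m1)) ((ZLat 2).neg_mem (lat_smul_nat _ _ hm1)) h1
    convert h3 using 1
    · module
    · exact sub_eq_add_neg _ _
  have hV : ∀ X, ∃ y, JoinedIn O u y ∧ X < |pdot l y| := by
    by_contra hcon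
    push Not at hcon
    obtain ⟨X, hX⟩ := hcon
    have hX' : ∀ k : ℕ, ∀ z ∈ C, |pdot l ((⇑F)^[n1 * k] z - (k : ℝ) • m1)| ≤ X :=
      fun k z hz => hX _ (hjk k z hz)
    set Cl := |l 0| + |l 1| with hCl
    have hCl0 : 0 ≤ Cl := by positivity
    set c := (n1 : ℝ)⁻¹ • m1 with hc
    have hm1c : m1 = (n1 : ℝ) • c := by
      rw [hc, smul_smul, mul_inv_cancel₀ hn1pos.ne', one_smul]
    have hS : ∀ ρ ∈ S, pdot l ρ = pdot l c := by
      intro ρ hρ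
      rw [← hrot] at hρ
      obtain ⟨n, z, hn, hz, hlim⟩ := hρ
      have h1 : Tendsto (fun i => pdot l ((n i : ℝ)⁻¹ • ((⇑F)^[n i] (z i) - z i))) atTop
        (𝓝 (pdot l ρ)) := ((pdot_cont l).tendsto ρ).comp hlim
      have h2 : Tendsto (fun i => (n i : ℝ)⁻¹ • pdot l ((⇑F)^[n i] (z i) - z i)) atTop
          (𝓝 (pdot l c)) := by
        refine lim_bdd n hn _ _ (X + Cl * (n1 * M + D + n1 * ‖c‖)) ?_
        intro i
        obtain ⟨m, hm, hzC⟩ := hCcov (z i) (hz i)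
        set z' := z i - m with hz'
        have hzi : z i = z' + m := by rw [hz']; abel
        rw [hzi, iter_add F hF _ _ _ hm]
        set k := n i / n1 with hk
        set r := n i % n1 with hr
        have hkr : n i = r + n1 * k := (Nat.mod_add_div _ _).symm
        have hr1 : r ≤ n1 := (Nat.mod_lt _ hn1').le
        have hr2 : (r : ℝ) ≤ n1 := by exact_mod_cast hr1
        have e1 : (⇑F)^[n i] z' = (⇑F)^[r] ((⇑F)^[n1 * k] z') := by
          rw [hkr, Function.iterate_add_apply]
        have e2 : (n i : ℝ) = r + n1 * k := by exact_mod_cast hkr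
        have e3 : pdot l ((⇑F)^[n i] z' + m - (z' + m)) - (n i : ℝ) • pdot l c =
            pdot l ((⇑F)^[n1 * k] z' - (k : ℝ) • m1) +
            pdot l (((⇑F)^[r] ((⇑F)^[n1 * k] z') - (⇑F)^[n1 * k] z') - z' - (r : ℝ) • c) := by
          rw [smul_eq_mul, ← pdot_smul, ← pdot_sub, ← pdot_add, e1, e2, hm1c]
          congr 1
          module
        rw [e3, Real.norm_eq_abs]
        refine (abs_add_le _ _).trans (add_le_add (hX' k z' hzC) ?_)
        refine (pdot_le _ _).trans ?_
        gcongr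
        refine (norm_sub_le _ _).trans (add_le_add ((norm_sub_le _ _).trans
          (add_le_add ?_ (hD _ hzC))) ?_)
        · refine (hM _ _).trans ?_
          gcongr
        · rw [norm_smul, Real.norm_of_nonneg (by positivity)]
          gcongr
      refine tendsto_nhds_unique h1 ?_
      refine h2.congr ?_
      intro i
      rw [pdot_smul, smul_eq_mul]
    have hpS : p ∈ S := hSseg ▸ left_mem_segment ℝ p q
    have hqS : q ∈ S := hSseg ▸ right_mem_segment ℝ p q
    have hq0 := sdot_self_pos l hne
    have hll : pdot l l = 0 := by simp [pdot]; ring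
    have par : ∀ w, pdot l w = 0 → w = (sdot l w / sdot l l) • l := by
      intro w hw
      apply dots_inj l hne
      · rw [sdot_smul]; field_simp
      · rw [pdot_smul, hll, hw]; simp
    have e1 := par (q - p) (by rw [pdot_sub, hS q hqS, hS p hpS]; simp)
    have e2 := par (c - p) (by rw [pdot_sub, hS p hpS]; simp)
    set t1 := sdot l (q - p) / sdot l l
    set t2 := sdot l (c - p) / sdot l l
    have ht1 : t1 ≠ 0 := by
      intro h
      rw [h, zero_smul] at e1
      exact hpq (sub_eq_zero.1 e1).symm
    have hcA : c ∈ (affineSpan ℝ S : Set (E 2)) := by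
      have : AffineMap.lineMap p q (t2 / t1) ∈ affineSpan ℝ S :=
        AffineMap.lineMap_mem _ (hsub hpS) (hsub hqS)
      have e3 : AffineMap.lineMap p q (t2 / t1) = c := by
        rw [AffineMap.lineMap_apply, vsub_eq_sub, vadd_eq_add, e1, smul_smul,
          div_mul_cancel₀ _ ht1, ← e2]
        abel
      rw [e3] at this
      exact this
    exact hnorat _ hcA (rat_of_lat m1 hm1 n1)
  obtain ⟨K, hK, hKO, hR⟩ := enclosure O hO u l hlL hne hjl hV 2
  exact ⟨K, hK, fun w hw => hKO hw, hR⟩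

lemma key_hull (F : E 2 ≃ₜ E 2) (hF : ∀ z : E 2, ∀ m ∈ ZLat 2, F (z + m) = F z + m)
    (C : Set (E 2)) (hCo : IsOpen C) (hCb : Bornology.IsBounded C)
    (hK : ∃ K, IsCompact K ∧
      (∀ w ∈ K, ∃ (i : ℕ) (m : E 2), m ∈ ZLat 2 ∧ ∃ z ∈ C, w = (⇑F)^[i] (z + m)) ∧
      ∃ R, ∀ x, ‖x‖ ≤ 2 → ∀ y, JoinedIn Kᶜ x y → ‖y‖ ≤ R) :
    ∃ c : ℝ, 0 ≤ c ∧ ∀ (n : ℕ) (A : Set (E 2)), IsClosed A → Convex ℝ A →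
      (∀ z ∈ C, ∀ w, ‖w - ((⇑F)^[n] z - z)‖ ≤ c → w ∈ A) → ∀ x, (⇑F)^[n] x - x ∈ A := by
  obtain ⟨K, hKc, hKO, R, hR⟩ := hK
  obtain ⟨c, hc⟩ := shadow F hF C hCo hCb K hKc hKO
  refine ⟨|c| + 2, by positivity, ?_⟩
  intro n A hAc hAv hA x0
  obtain ⟨m, hm, hx⟩ := exists_fund x0
  set x := x0 - m with hxd
  have hx0 : x0 = x + m := by rw [hxd]; abel
  have h := hull_lemma F K R x (hR x hx) n ((fun z => z + -x) ⁻¹' A)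
    (hAc.preimage (by fun_prop)) (hAv.translate_preimage_left _) ?_
  · rw [hx0, iter_add F hF n x m hm]
    have e : (⇑F)^[n] x + m - (x + m) = (⇑F)^[n] x + -x := by abel
    rw [e]; exact h
  · intro w hw
    obtain ⟨z, hz, hzc⟩ := hc w hw n
    refine hA z hz _ ?_
    have e : (⇑F)^[n] w + -x - ((⇑F)^[n] z - z) = ((⇑F)^[n] w - ((⇑F)^[n] z - z)) - x := by abel
    rw [e]
    exact (norm_sub_le _ _).trans (add_le_add (hzc.trans (le_abs_self c)) hx)

lemma approx_S (F : E 2 ≃ₜ E 2) (hF : ∀ z : E 2, ∀ m ∈ ZLat 2, F (z + m) = F z + m)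
    (U : Set (T 2)) (S : Set (E 2)) (hrot : rotU (⇑F) U = S) (ε : ℝ) (hε : 0 < ε) :
    ∃ N : ℕ, ∀ n ≥ N, ∀ z, tpi 2 z ∈ U → ∃ s ∈ S, ‖(n : ℝ)⁻¹ • ((⇑F)^[n] z - z) - s‖ ≤ ε := by
  by_contra hcon
  push Not at hcon
  choose n hn z hz hfar using hcon
  obtain ⟨M, hM0, hM⟩ := disp_bdd F F.continuous hF
  have hnt : Tendsto n atTop atTop := tendsto_atTop_mono hn tendsto_id
  have hmem : ∀ i, (n i : ℝ)⁻¹ • ((⇑F)^[n i] (z i) - z i) ∈ closedBall (0 : E 2) M := by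
    intro i
    rw [mem_closedBall_zero_iff, norm_smul, norm_inv, Real.norm_natCast]
    rcases Nat.eq_zero_or_pos (n i) with h | h
    · simp [h, hM0]
    · have hpos : (0 : ℝ) < n i := by exact_mod_cast h
      rw [inv_mul_le_iff₀ hpos]
      exact hM _ _
  obtain ⟨ρ, -, g, hg, hlim⟩ := (isCompact_closedBall (0 : E 2) M).tendsto_subseq hmem
  have hρ : ρ ∈ S := by
    rw [← hrot]
    exact ⟨n ∘ g, z ∘ g, hnt.comp hg.tendsto_atTop, fun i => hz _, hlim⟩
  have h1 : Tendsto (fun i => ‖(n (g i) : ℝ)⁻¹ • ((⇑F)^[n (g i)] (z (g i)) - z (g i)) - ρ‖)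
    atTop (𝓝 0) := tendsto_iff_norm_sub_tendsto_zero.1 hlim
  obtain ⟨i, hi⟩ := (h1.eventually_lt_const hε).exists
  exact absurd (hfar (g i) ρ hρ) (not_lt.2 hi.le)

lemma rotSet_sub (F : E 2 ≃ₜ E 2) (hF : ∀ z : E 2, ∀ m ∈ ZLat 2, F (z + m) = F z + m)
    (U : Set (T 2)) (S : Set (E 2)) (hrot : rotU (⇑F) U = S)
    (hSc : IsClosed S) (hSv : Convex ℝ S) (C : Set (E 2)) (hCU : C ⊆ tpi 2 ⁻¹' U)
    (c : ℝ) (hc0 : 0 ≤ c) (hc : ∀ (n : ℕ) (A : Set (E 2)), IsClosed A → Convex ℝ A →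
      (∀ z ∈ C, ∀ w, ‖w - ((⇑F)^[n] z - z)‖ ≤ c → w ∈ A) → ∀ x, (⇑F)^[n] x - x ∈ A) :
    rotSet (⇑F) ⊆ S := by
  rintro ρ ⟨n, x, hn, -, hlim⟩
  rw [← hSc.closure_eq, closure_eq_iInter_cthickening]
  simp only [mem_iInter]
  intro ε hε
  obtain ⟨N, hN⟩ := approx_S F hF U S hrot (ε / 2) (by positivity)
  refine isClosed_cthickening.mem_of_tendsto hlim ?_
  have hnr : Tendsto (fun i => (n i : ℝ)) atTop atTop := tendsto_natCast_atTop_atTop.comp hn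
  filter_upwards [hn.eventually_ge_atTop (N + 1), hnr.eventually_ge_atTop (c / (ε / 2))] with i h1 h2
  have hpos : (0 : ℝ) < n i := by exact_mod_cast (show 0 < n i by omega)
  refine hc (n i) ((fun w => (n i : ℝ)⁻¹ • w) ⁻¹' cthickening ε S)
    (isClosed_cthickening.preimage (by fun_prop)) ((hSv.cthickening ε).smul_preimage _) ?_ (x i)
  intro z hz w hw
  obtain ⟨s, hs, hzs⟩ := hN (n i) (by omega) z (hCU hz)
  refine mem_cthickening_of_dist_le _ s _ _ hs ?_
  rw [dist_eq_norm]
  have e : (n i : ℝ)⁻¹ • w - s = (n i : ℝ)⁻¹ • (w - ((⇑F)^[n i] z - z)) +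
    ((n i : ℝ)⁻¹ • ((⇑F)^[n i] z - z) - s) := by rw [smul_sub]; abel
  rw [e]
  refine (norm_add_le _ _).trans ?_
  have h3 : ‖(n i : ℝ)⁻¹ • (w - ((⇑F)^[n i] z - z))‖ ≤ ε / 2 := by
    rw [norm_smul, norm_inv, Real.norm_natCast, inv_mul_le_iff₀ hpos]
    rw [div_le_iff₀ (by positivity)] at h2
    linarith
  linarith

lemma reach (F : E 2 ≃ₜ E 2) (hF : ∀ z : E 2, ∀ m ∈ ZLat 2, F (z + m) = F z + m)
    (C : Set (E 2))
    (c : ℝ) (hc0 : 0 ≤ c) (hc : ∀ (n : ℕ) (A : Set (E 2)), IsClosed A → Convex ℝ A →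
      (∀ z ∈ C, ∀ w, ‖w - ((⇑F)^[n] z - z)‖ ≤ c → w ∈ A) → ∀ x, (⇑F)^[n] x - x ∈ A)
    (ψ : E 2 →L[ℝ] ℝ) (ρ : E 2) (hρ : ρ ∈ rotSet (⇑F)) (η : ℝ) (hη : 0 < η) :
    ∃ N : ℕ, ∀ n ≥ N, ∃ z ∈ C, ψ ρ - η < ψ ((n : ℝ)⁻¹ • ((⇑F)^[n] z - z)) := by
  obtain ⟨N, hN⟩ := exists_nat_ge (‖ψ‖ * c / (η / 2))
  refine ⟨N + 1, ?_⟩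
  intro n hn
  by_contra hcon
  push Not at hcon
  have hn0 : 0 < n := by omega
  have hpos : (0 : ℝ) < n := by exact_mod_cast hn0
  have hNn : (N : ℝ) ≤ n := by exact_mod_cast (show N ≤ n by omega)
  rw [div_le_iff₀ (by positivity)] at hN
  set b := ψ ρ - η / 2 with hb
  have hle : ‖ψ‖ * c ≤ n * (η / 2) := hN.trans (by gcongr)
  have h1 : ∀ x, ψ ((⇑F)^[n] x - x) ≤ n * b := by
    refine hc n {w | ψ w ≤ n * b} (isClosed_le ψ.continuous continuous_const)
      (convex_halfSpace_le ψ.toLinearMap.isLinear _) ?_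
    intro z hz w hw
    show ψ w ≤ n * b
    have h2 := hcon z hz
    rw [map_smul, smul_eq_mul, inv_mul_le_iff₀ hpos] at h2
    have h3 : ψ w - ψ ((⇑F)^[n] z - z) ≤ ‖ψ‖ * c := by
      rw [← map_sub]
      exact (le_abs_self _).trans ((ψ.le_opNorm _).trans (by gcongr))
    rw [hb]; linarith
  have h2 : ∀ (k : ℕ) x, ψ ((⇑F)^[n * k] x - x) ≤ (n * k : ℝ) * b := by
    intro k
    induction k with
    | zero => intro x; simp
    | succ k ih =>
      intro x
      have e : (⇑F)^[n * (k + 1)] x = (⇑F)^[n] ((⇑F)^[n * k] x) := by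
        rw [← Function.iterate_add_apply]; congr 2; ring
      have e2 : (⇑F)^[n * (k + 1)] x - x =
        ((⇑F)^[n] ((⇑F)^[n * k] x) - (⇑F)^[n * k] x) + ((⇑F)^[n * k] x - x) := by rw [e]; abel
      rw [e2, map_add]
      have := h1 ((⇑F)^[n * k] x)
      have := ih x
      push_cast
      linarith
  obtain ⟨M, hM0, hM⟩ := disp_bdd F F.continuous hF
  set B := ‖ψ‖ * (n * M) + n * |b| with hB
  have h3 : ∀ (j : ℕ) x, ψ ((⇑F)^[j] x - x) ≤ j * b + B := by
    intro j x
    set k := j / n with hk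
    set r := j % n with hr
    have hkr : j = r + n * k := (Nat.mod_add_div _ _).symm
    have hr1 : r ≤ n := (Nat.mod_lt _ hn0).le
    have hr2 : (r : ℝ) ≤ n := by exact_mod_cast hr1
    have e0 : (j : ℝ) = r + n * k := by exact_mod_cast hkr
    have e1 : (⇑F)^[j] x = (⇑F)^[r] ((⇑F)^[n * k] x) := by
      rw [← Function.iterate_add_apply, ← hkr]
    have e2 : (⇑F)^[j] x - x =
      ((⇑F)^[r] ((⇑F)^[n * k] x) - (⇑F)^[n * k] x) + ((⇑F)^[n * k] x - x) := by rw [e1]; abel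
    rw [e2, map_add, e0]
    have a1 := h2 k x
    have a2 : ψ ((⇑F)^[r] ((⇑F)^[n * k] x) - (⇑F)^[n * k] x) ≤ ‖ψ‖ * (n * M) := by
      refine (le_abs_self _).trans ((ψ.le_opNorm _).trans ?_)
      gcongr
      refine (hM _ _).trans ?_
      gcongr
    have a3 : -(n * |b|) ≤ r * b := by
      have : (r : ℝ) * |b| ≤ n * |b| := by gcongr
      have := mul_le_mul_of_nonneg_left (neg_abs_le b) (Nat.cast_nonneg (α := ℝ) r)
      linarith
    rw [hB]; linarith
  obtain ⟨j, x, hj, -, hlim⟩ := hρ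
  have hjr : Tendsto (fun i => (j i : ℝ)) atTop atTop := tendsto_natCast_atTop_atTop.comp hj
  have l1 : Tendsto (fun i => ψ ((j i : ℝ)⁻¹ • ((⇑F)^[j i] (x i) - x i))) atTop (𝓝 (ψ ρ)) :=
    (ψ.continuous.tendsto ρ).comp hlim
  have l2 : Tendsto (fun i => b + (j i : ℝ)⁻¹ * B) atTop (𝓝 b) := by
    simpa using (hjr.inv_tendsto_atTop.mul_const B).const_add b
  have := le_of_tendsto_of_tendsto l1 l2 (by
    filter_upwards [hj.eventually_ge_atTop 1] with i hi
    have hp : (0 : ℝ) < j i := by exact_mod_cast hi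
    rw [map_smul, smul_eq_mul, inv_mul_le_iff₀ hp]
    have := h3 (j i) (x i)
    rw [mul_add, mul_inv_cancel_left₀ hp.ne']
    exact this)
  linarith

/-- **Theorem (semilocal rotation sets, part (b)).**
If `U ⊆ T²` is open, bounded, connected and recurrent and `ρ_U(F) = S` is a line
segment of positive length whose affine span contains no rational vectors, then
`ρ(F) = S` and `φ_n(U) → S` in Hausdorff distance. -/
theorem semilocal_rotation_sets_irrational_segment
    (F : E 2 ≃ₜ E 2) (f : T 2 ≃ₜ T 2) (hlift : IsLift F f)
    (U : Set (T 2)) (hUopen : IsOpen U) (hUbdd : BoundedSet U)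
    (hUconn : IsConnected U) (hUrec : Recurrent f U)
    (S : Set (E 2)) (p q : E 2) (hpq : p ≠ q) (hSseg : S = segment ℝ p q)
    (hnorat : ∀ z ∈ (affineSpan ℝ S : Set (E 2)), ¬ RatVec z)
    (hrot : rotU (⇑F) U = S) :
    rotSet (⇑F) = S ∧
      Tendsto
        (fun n : ℕ =>
          Metric.hausdorffDist ((fun z => (n : ℝ)⁻¹ • ((⇑F)^[n] z - z)) '' (tpi 2 ⁻¹' U)) S)
        atTop (𝓝 0) := by
  have hF := hlift.2
  obtain ⟨C, hCo, hCpc, hCb, hCU, hCcov⟩ := exists_comp U hUopen hUbdd hUconn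
  obtain ⟨c, hc0, hc⟩ := key_hull F hF C hCo hCb
    (get_enclosure F f hlift U hUrec S p q hpq hSseg hnorat hrot C hCpc hCb hCU hCcov)
  have hSv : Convex ℝ S := hSseg ▸ convex_segment p q
  have hScpt : IsCompact S := by
    rw [hSseg, segment_eq_image_lineMap]
    exact isCompact_Icc.image AffineMap.lineMap_continuous
  have hsub := rotSet_sub F hF U S hrot hScpt.isClosed hSv C hCU c hc0 hc
  have hsup : S ⊆ rotSet (⇑F) := by
    rw [← hrot]
    rintro ρ ⟨n, z, hn, -, hl⟩
    exact ⟨n, z, hn, fun i => mem_univ _, hl⟩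
  have hpS : p ∈ S := hSseg ▸ left_mem_segment ℝ p q
  have hqS : q ∈ S := hSseg ▸ right_mem_segment ℝ p q
  refine ⟨hsub.antisymm hsup, ?_⟩
  set ψ : E 2 →L[ℝ] ℝ := innerSL ℝ (q - p) with hψ
  have hL : 0 < ‖q - p‖ := norm_pos_iff.2 (sub_ne_zero.2 hpq.symm)
  set L := ‖q - p‖ with hLd
  have hψn : ‖ψ‖ = L := innerSL_apply_norm ℝ (q - p)
  have hψv : ψ (q - p) = L * L := by
    rw [hψ, innerSL_apply_apply]; exact real_inner_self_eq_norm_mul_norm _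
  have key : ∀ ε > 0, ∀ᶠ n : ℕ in atTop, Metric.hausdorffDist
      ((fun z => (n : ℝ)⁻¹ • ((⇑F)^[n] z - z)) '' (tpi 2 ⁻¹' U)) S ≤ ε := by
    intro ε hε
    set δ := ε / 4 with hδ
    have hδ0 : 0 < δ := by positivity
    obtain ⟨N1, hN1⟩ := approx_S F hF U S hrot δ hδ0
    obtain ⟨N2, hN2⟩ := reach F hF C c hc0 hc ψ q (hsup hqS) (δ * L) (by positivity)
    obtain ⟨N3, hN3⟩ := reach F hF C c hc0 hc (-ψ) p (hsup hpS) (δ * L) (by positivity)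
    filter_upwards [eventually_ge_atTop N1, eventually_ge_atTop N2, eventually_ge_atTop N3]
      with n h1 h2 h3
    set g : E 2 → E 2 := fun z => (n : ℝ)⁻¹ • ((⇑F)^[n] z - z) with hg
    have hgc : Continuous g := by
      have := F.continuous.iterate n
      fun_prop
    obtain ⟨z1, hz1, hq1⟩ : ∃ z ∈ C, ψ q - δ * L < ψ (g z) := hN2 n h2
    obtain ⟨z2, hz2, hp2⟩ : ∃ z ∈ C, (-ψ) p - δ * L < (-ψ) (g z) := hN3 n h3
    simp only [ContinuousLinearMap.neg_apply] at hp2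
    have hg1 : ∀ z, tpi 2 z ∈ U → ∃ s ∈ S, ‖g z - s‖ ≤ δ := hN1 n h1
    refine Metric.hausdorffDist_le_of_mem_dist hε.le ?_ ?_
    · rintro _ ⟨z, hz, rfl⟩
      obtain ⟨s, hs, h⟩ := hg1 z hz
      exact ⟨s, hs, by rw [dist_eq_norm]; linarith⟩
    · intro s hs
      have hpar : ∀ s ∈ S, ∃ θ : ℝ, 0 ≤ θ ∧ θ ≤ 1 ∧ s = p + θ • (q - p) := by
        intro s hs
        rw [hSseg, segment_eq_image'] at hs
        obtain ⟨θ, hθ, rfl⟩ := hs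
        exact ⟨θ, hθ.1, hθ.2, rfl⟩
      obtain ⟨θ, hθ0, hθ1, hsθ⟩ := hpar s hs
      have hψs : ψ s = ψ p + θ * (L * L) := by
        rw [hsθ, map_add, map_smul, hψv, smul_eq_mul]
      have hψq : ψ q = ψ p + L * L := by
        rw [← hψv, map_sub]; ring
      have hLL : 0 < L * L := by positivity
      have hs1 : ψ p ≤ ψ s := by rw [hψs]; nlinarith
      have hs2 : ψ s ≤ ψ q := by rw [hψs, hψq]; nlinarith
      obtain ⟨z, hz, hzs⟩ : ∃ z ∈ C, |ψ (g z) - ψ s| ≤ δ * L := by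
        have hδL : 0 < δ * L := by positivity
        rcases le_total (ψ (g z1)) (ψ s) with h | h
        · exact ⟨z1, hz1, by rw [abs_le]; constructor <;> linarith⟩
        rcases le_total (ψ s) (ψ (g z2)) with h' | h'
        · exact ⟨z2, hz2, by rw [abs_le]; constructor <;> linarith⟩
        obtain ⟨z, hz, hzz⟩ := hCpc.isConnected.isPreconnected.intermediate_value hz2 hz1
          (ψ.continuous.comp hgc).continuousOn (show ψ s ∈ Icc _ _ from ⟨h', h⟩)
        have hzz' : ψ (g z) = ψ s := hzz
        exact ⟨z, hz, by rw [hzz', sub_self, abs_zero]; exact hδL.le⟩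
      obtain ⟨s', hs', hd⟩ := hg1 z (hCU hz)
      obtain ⟨θ', -, -, hsθ'⟩ := hpar s' hs'
      have e1 : s' - s = (θ' - θ) • (q - p) := by rw [hsθ, hsθ']; module
      have a1 : |ψ (g z) - ψ s'| ≤ δ * L := by
        rw [← map_sub, ← Real.norm_eq_abs]
        refine (ψ.le_opNorm _).trans ?_
        rw [hψn, mul_comm]
        gcongr
      have a2 : |ψ s' - ψ s| ≤ 2 * δ * L := by
        rw [abs_le] at a1 hzs ⊢
        constructor <;> linarith [a1.1, a1.2, hzs.1, hzs.2]
      have a3 : ‖s' - s‖ ≤ 2 * δ := by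
        rw [← map_sub, e1, map_smul, hψv, smul_eq_mul, abs_mul, abs_of_pos hLL, ← mul_assoc] at a2
        rw [e1, norm_smul, Real.norm_eq_abs, ← hLd]
        exact le_of_mul_le_mul_right a2 hL
      refine ⟨g z, ⟨z, hCU hz, rfl⟩, ?_⟩
      rw [dist_comm, dist_eq_norm]
      have e2 : g z - s = (g z - s') + (s' - s) := by abel
      rw [e2]
      refine (norm_add_le _ _).trans ?_
      linarith
  rw [Metric.tendsto_atTop]
  intro ε hε
  obtain ⟨N, hN⟩ := eventually_atTop.1 (key (ε / 2) (by positivity))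
  refine ⟨N, fun n hn => ?_⟩
  rw [Real.dist_eq, sub_zero, abs_of_nonneg Metric.hausdorffDist_nonneg]
  linarith [hN n hn]
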